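/- Let Ω ⊂ ℝ^N be a bounded domain, s ∈ (0,1), p ∈ (1,∞). The operator A : W₀^(s,p)(Ω) → (W₀^(s,p)(Ω))* defined by ⟨A(u), v⟩ = ∫∫_{ℝ^{2N}} |u(x)-u(y)|^(p-2)(u(x)-u(y))(v(x)-v(y)) / |x-y|^(N+sp) dx dy is of type (S₊): if u_n ⇀ u weakly in W₀^(s,p)(Ω) and limsup_{n→∞} ⟨A(u_n), u_n - u⟩ ≤ 0, then u_n → u strongly in W₀^(s,p)(Ω). -/

import Mathlib

open MeasureTheory Metric Set Filter

noncomputable section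

/-- The Gagliardo `p`-energy `‖u‖^p = ∫∫ |u(x)-u(y)|^p / |x-y|^{N+sp} dx dy`. -/
def gagE (N : ℕ) (s p : ℝ) (u : EuclideanSpace ℝ (Fin N) → ℝ) : ℝ :=
  ∫ x, ∫ y, |u x - u y| ^ p / ‖x - y‖ ^ ((N : ℝ) + s * p)

/-- The Gagliardo norm of `W₀^{s,p}`. -/
def gagNorm (N : ℕ) (s p : ℝ) (u : EuclideanSpace ℝ (Fin N) → ℝ) : ℝ :=
  gagE N s p u ^ (1 / p)

/-- Membership in `W₀^{s,p}(Ω)`: measurable, finite Gagliardo energy, vanishing outside `Ω`. -/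
def memW0 (N : ℕ) (s p : ℝ) (Ω : Set (EuclideanSpace ℝ (Fin N)))
    (u : EuclideanSpace ℝ (Fin N) → ℝ) : Prop :=
  Measurable u ∧
  Integrable (fun z : EuclideanSpace ℝ (Fin N) × EuclideanSpace ℝ (Fin N) =>
    |u z.1 - u z.2| ^ p / ‖z.1 - z.2‖ ^ ((N : ℝ) + s * p)) ∧
  ∀ x, x ∉ Ω → u x = 0

/-- The fractional `p`-Laplacian pairing `⟨A u, v⟩`. -/
def fracPair (N : ℕ) (s p : ℝ) (u v : EuclideanSpace ℝ (Fin N) → ℝ) : ℝ :=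
  ∫ x, ∫ y, |u x - u y| ^ (p - 2) * (u x - u y) * (v x - v y) / ‖x - y‖ ^ ((N : ℝ) + s * p)

/-- `q` is below the critical exponent `p*ₛ = Np/(N-sp)` (`= ∞` if `sp ≥ N`). -/
def subCrit (N : ℕ) (s p q : ℝ) : Prop :=
  s * p < N → q < N * p / ((N : ℝ) - s * p)

/-- The class `W_q`: `h ρ^{sa} ∈ L^r(Ω)` for some `a ∈ [0,q)`, `r ∈ (1,∞)` with
`1/r + a/p + (q-a)/p*ₛ < 1` (the last term read as `0` when `p*ₛ = ∞`). -/
def inWq (N : ℕ) (Ω : Set (EuclideanSpace ℝ (Fin N))) (s p q : ℝ)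
    (h : EuclideanSpace ℝ (Fin N) → ℝ) : Prop :=
  ∃ a r : ℝ, 0 ≤ a ∧ a < q ∧ 1 < r ∧
    ((s * p < N ∧ 1 / r + a / p + (q - a) * ((N : ℝ) - s * p) / ((N : ℝ) * p) < 1) ∨
      (¬ s * p < N ∧ 1 / r + a / p < 1)) ∧
    IntegrableOn (fun x => |h x * infDist x (frontier Ω) ^ (s * a)| ^ r) Ω

/-- The class `W̃_q`: `h ρ^{sa} ∈ L^r(Ω)` for some `a ∈ [0,1]`, `r ∈ (1,∞)` with
`1/r + a/p + (max{p,q}-a)/p*ₛ < 1`. -/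
def inWtq (N : ℕ) (Ω : Set (EuclideanSpace ℝ (Fin N))) (s p q : ℝ)
    (h : EuclideanSpace ℝ (Fin N) → ℝ) : Prop :=
  ∃ a r : ℝ, 0 ≤ a ∧ a ≤ 1 ∧ 1 < r ∧
    ((s * p < N ∧
        1 / r + a / p + (max p q - a) * ((N : ℝ) - s * p) / ((N : ℝ) * p) < 1) ∨
      (¬ s * p < N ∧ 1 / r + a / p < 1)) ∧
    IntegrableOn (fun x => |h x * infDist x (frontier Ω) ^ (s * a)| ^ r) Ω

/-- Weak convergence `uₙ ⇀ u` in `W₀^{s,p}(Ω)`: bounded Gagliardo norms together with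
convergence against all continuous compactly supported test functions (a total family in
the dual `W^{-s,p'}(Ω)`). -/
def weakConv (N : ℕ) (s p : ℝ) (u_ : ℕ → EuclideanSpace ℝ (Fin N) → ℝ)
    (u : EuclideanSpace ℝ (Fin N) → ℝ) : Prop :=
  (∃ M : ℝ, ∀ n, gagNorm N s p (u_ n) ≤ M) ∧
  ∀ φ : EuclideanSpace ℝ (Fin N) → ℝ, Continuous φ → HasCompactSupport φ →
    Tendsto (fun n => ∫ x, u_ n x * φ x) atTop (nhds (∫ x, u x * φ x))

/-- The first eigenvalue `λ₁ = inf{‖u‖^p : u ∈ W₀^{s,p}(Ω), ∫_Ω h|u|^p = 1}`. -/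
def lam1 (N : ℕ) (s p : ℝ) (Ω : Set (EuclideanSpace ℝ (Fin N)))
    (h : EuclideanSpace ℝ (Fin N) → ℝ) : ℝ :=
  sInf {t : ℝ | ∃ u, memW0 N s p Ω u ∧ (∫ x in Ω, h x * |u x| ^ p) = 1 ∧ t = gagE N s p u}

/-- `(λ, u)` is an eigenpair of `(-Δ)ₚˢ u = λ h |u|^{p-2} u` in `Ω`, `u = 0` outside `Ω`. -/
def isEigenpair (N : ℕ) (s p : ℝ) (Ω : Set (EuclideanSpace ℝ (Fin N)))
    (h : EuclideanSpace ℝ (Fin N) → ℝ) (lam : ℝ)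
    (u : EuclideanSpace ℝ (Fin N) → ℝ) : Prop :=
  memW0 N s p Ω u ∧ ¬ (∀ᵐ x ∂volume.restrict Ω, u x = 0) ∧
  ∀ v, memW0 N s p Ω v →
    fracPair N s p u v = lam * ∫ x in Ω, h x * |u x| ^ (p - 2) * u x * v x

/-!
Since `⟨A u, v⟩` is the integral of `dualPow p (u x - u y) * (v x - v y)` against the measure
`dx dy / |x - y|^(N + sp)`, the statement is about the duality map of the `L^p` space of this
measure. Boundedness and convergence against test functions give `⟨A u, uₙ - u⟩ → 0`: it suffices
to test the increments `uₙ x - uₙ y` with continuous functions whose compact support avoids the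
diagonal, as these are dense in the dual space, and there Fubini's theorem turns such a test into
one of `uₙ` itself. With the bound on the upper limit, the nonnegative numbers
`⟨A uₙ - A u, uₙ - u⟩` tend to `0`. Finally, by compactness of the sphere and homogeneity, for every
`ε > 0` there is `C` such that
`|a - b|^p ≤ ε (|a|^p + |b|^p) + C (dualPow p a - dualPow p b) (a - b)`,
so the norms of `uₙ - u` tend to `0`.
-/

lemma exists_forall_le_mul_of_isCompact {X : Type*} [TopologicalSpace X] {K : Set X}
    (hK : IsCompact K) {F G : X → ℝ} (hF : Continuous F) (hG : Continuous G)
    (hG0 : ∀ x ∈ K, 0 ≤ G x) (hneg : ∀ x ∈ K, G x = 0 → F x < 0) :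
    ∃ C, ∀ x ∈ K, F x ≤ C * G x := by
  have hGpos : ∀ x ∈ K ∩ {x | 0 ≤ F x}, 0 < G x := fun x hx =>
    (hG0 x hx.1).lt_of_ne' fun h => (hneg x hx.1 h).not_ge hx.2
  obtain ⟨C, hC⟩ := (hK.inter_right (isClosed_le continuous_const hF)).bddAbove_image
    (hF.continuousOn.div hG.continuousOn fun x hx => (hGpos x hx).ne')
  refine ⟨max C 0, fun x hx => ?_⟩
  rcases lt_or_ge (F x) 0 with hFx | hFx
  · exact hFx.le.trans (mul_nonneg (le_max_right _ _) (hG0 x hx))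
  · rw [← div_le_iff₀ (hGpos x ⟨hx, hFx⟩)]
    exact (hC (mem_image_of_mem _ ⟨hx, hFx⟩)).trans (le_max_left _ _)

/-- The derivative `t ↦ |t|^(p-2) t` of `|t|^p / p`: the scalar duality map of exponent `p`. -/
def dualPow (p t : ℝ) : ℝ := |t| ^ (p - 2) * t

section DualPow

variable {p : ℝ}

lemma hasDerivAt_abs_rpow_div (hp : 1 < p) (t : ℝ) :
    HasDerivAt (fun t : ℝ => |t| ^ p / p) (dualPow p t) t := by
  refine ((hasDerivAt_abs_rpow t hp).div_const p).congr_deriv ?_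
  have : p ≠ 0 := by positivity
  rw [dualPow]
  field_simp

lemma continuous_dualPow (hp : 1 < p) : Continuous (dualPow p) := by
  have hderiv : deriv (fun t : ℝ => |t| ^ p / p) = dualPow p :=
    funext fun t => (hasDerivAt_abs_rpow_div hp t).deriv
  rw [← hderiv]
  exact ((contDiff_norm_rpow (E := ℝ) hp).div_const p).continuous_deriv le_rfl

lemma dualPow_neg (t : ℝ) : dualPow p (-t) = -dualPow p t := by
  simp only [dualPow, abs_neg, mul_neg]

lemma dualPow_mul {c : ℝ} (hc : 0 < c) (t : ℝ) :
    dualPow p (c * t) = c ^ (p - 1) * dualPow p t := by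
  rw [dualPow, dualPow, abs_mul, abs_of_pos hc, Real.mul_rpow hc.le (abs_nonneg t),
    show p - 1 = (p - 2) + 1 by ring, Real.rpow_add_one hc.ne']
  ring

lemma abs_dualPow (hp : 1 < p) (t : ℝ) : |dualPow p t| = |t| ^ (p - 1) := by
  rcases eq_or_ne t 0 with rfl | ht
  · simp [dualPow, Real.zero_rpow (sub_pos.2 hp).ne']
  · rw [dualPow, abs_mul, Real.abs_rpow_of_nonneg (abs_nonneg t), abs_abs,
      ← Real.rpow_add_one (abs_ne_zero.2 ht)]
    ring_nf

lemma dualPow_mul_self (hp : 1 < p) (t : ℝ) : dualPow p t * t = |t| ^ p := by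
  rcases eq_or_ne t 0 with rfl | ht
  · simp [Real.zero_rpow (zero_lt_one.trans hp).ne']
  · rw [dualPow, mul_assoc, ← abs_mul_abs_self, ← mul_assoc,
      ← Real.rpow_add_one (abs_ne_zero.2 ht), ← Real.rpow_add_one (abs_ne_zero.2 ht)]
    ring_nf

lemma strictMono_dualPow (hp : 1 < p) : StrictMono (dualPow p) := by
  refine strictMono_of_odd_strictMonoOn_nonneg dualPow_neg fun a ha b hb hab => ?_
  have eq_rpow {t : ℝ} (ht : 0 ≤ t) : dualPow p t = t ^ (p - 1) := by
    have h0 : 0 ≤ dualPow p t := mul_nonneg (Real.rpow_nonneg (abs_nonneg t) _) ht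
    rw [← abs_of_nonneg h0, abs_dualPow hp, abs_of_nonneg ht]
  rw [eq_rpow ha, eq_rpow hb]
  exact Real.rpow_lt_rpow ha hab (sub_pos.2 hp)

lemma dualPow_sub_mul_sub_pos (hp : 1 < p) {a b : ℝ} (hab : a ≠ b) :
    0 < (dualPow p a - dualPow p b) * (a - b) := by
  rcases hab.lt_or_gt with h | h
  · exact mul_pos_of_neg_of_neg (sub_neg.2 (strictMono_dualPow hp h)) (sub_neg.2 h)
  · exact mul_pos (sub_pos.2 (strictMono_dualPow hp h)) (sub_pos.2 h)

lemma dualPow_sub_mul_sub_nonneg (hp : 1 < p) (a b : ℝ) :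
    0 ≤ (dualPow p a - dualPow p b) * (a - b) := by
  rcases eq_or_ne a b with rfl | hab
  · simp
  · exact (dualPow_sub_mul_sub_pos hp hab).le

lemma abs_dualPow_mul_le (hp : 1 < p) (a b : ℝ) : |dualPow p a * b| ≤ |a| ^ p + |b| ^ p := by
  have : 0 ≤ p - 1 := (sub_pos.2 hp).le
  have rpow_mul_self {x : ℝ} (hx : 0 ≤ x) : x ^ (p - 1) * x = x ^ p := by
    rw [← Real.rpow_add_one' hx (by linarith), sub_add_cancel]
  rw [abs_mul, abs_dualPow hp]
  rcases le_total |a| |b| with h | h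
  · calc |a| ^ (p - 1) * |b| ≤ |b| ^ (p - 1) * |b| := by gcongr
      _ = |b| ^ p := rpow_mul_self (abs_nonneg b)
      _ ≤ |a| ^ p + |b| ^ p := le_add_of_nonneg_left (by positivity)
  · calc |a| ^ (p - 1) * |b| ≤ |a| ^ (p - 1) * |a| := by gcongr
      _ = |a| ^ p := rpow_mul_self (abs_nonneg a)
      _ ≤ |a| ^ p + |b| ^ p := le_add_of_nonneg_right (by positivity)

lemma dualPow_mul_sub_le (hp : 1 < p) (a b : ℝ) :
    dualPow p a * (a - b) ≤ 2 * |a| ^ p + |b| ^ p := by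
  have := abs_dualPow_mul_le hp a b
  rw [mul_sub, dualPow_mul_self hp]
  linarith [neg_le_abs (dualPow p a * b)]

lemma exists_abs_sub_rpow_le_of_mem_sphere (hp : 1 < p) {ε : ℝ} (hε : 0 < ε) :
    ∃ C, ∀ z ∈ sphere (0 : ℝ × ℝ) 1, |z.1 - z.2| ^ p ≤
      ε * (|z.1| ^ p + |z.2| ^ p) + C * ((dualPow p z.1 - dualPow p z.2) * (z.1 - z.2)) := by
  have hp0 : 0 < p := zero_lt_one.trans hp
  have hcont {f : ℝ × ℝ → ℝ} (hf : Continuous f) : Continuous fun z => |f z| ^ p :=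
    hf.abs.rpow_const fun _ => Or.inr hp0.le
  have hdual := continuous_dualPow hp
  have hneg : ∀ z ∈ sphere (0 : ℝ × ℝ) 1, (dualPow p z.1 - dualPow p z.2) * (z.1 - z.2) = 0 →
      |z.1 - z.2| ^ p - ε * (|z.1| ^ p + |z.2| ^ p) < 0 := by
    rintro ⟨a, b⟩ hz hab
    obtain rfl : a = b := by
      by_contra h
      exact (dualPow_sub_mul_sub_pos hp h).ne' hab
    have ha : a ≠ 0 := by
      rintro rfl
      simp at hz
    have := Real.rpow_pos_of_pos (abs_pos.2 ha) p
    simp only [sub_self, abs_zero, Real.zero_rpow hp0.ne', zero_sub, neg_lt_zero]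
    positivity
  obtain ⟨C, hC⟩ := exists_forall_le_mul_of_isCompact (isCompact_sphere (0 : ℝ × ℝ) 1)
    ((hcont (by fun_prop)).sub (((hcont continuous_fst).add (hcont continuous_snd)).const_mul ε))
    (by fun_prop) (fun z _ => dualPow_sub_mul_sub_nonneg hp z.1 z.2) hneg
  exact ⟨C, fun z hz => sub_le_iff_le_add'.1 (hC z hz)⟩

lemma exists_abs_sub_rpow_le (hp : 1 < p) {ε : ℝ} (hε : 0 < ε) :
    ∃ C, ∀ a b : ℝ, |a - b| ^ p ≤
      ε * (|a| ^ p + |b| ^ p) + C * ((dualPow p a - dualPow p b) * (a - b)) := by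
  have hp0 : 0 < p := zero_lt_one.trans hp
  obtain ⟨C, hC⟩ := exists_abs_sub_rpow_le_of_mem_sphere hp hε
  refine ⟨C, fun a b => ?_⟩
  rcases eq_or_ne (a, b) 0 with h | h
  · obtain ⟨rfl, rfl⟩ := Prod.mk_eq_zero.1 h
    simp [Real.zero_rpow hp0.ne']
  -- both sides are positively homogeneous of degree `p`
  have hc : 0 < ‖(a, b)‖⁻¹ := inv_pos.2 (norm_pos_iff.2 h)
  set c := ‖(a, b)‖⁻¹
  have hunit := hC (c • (a, b)) (by
    rw [mem_sphere_zero_iff_norm, norm_smul, Real.norm_of_nonneg hc.le]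
    exact inv_mul_cancel₀ (norm_ne_zero_iff.2 h))
  simp only [Prod.smul_mk, smul_eq_mul, dualPow_mul hc, ← mul_sub, abs_mul, abs_of_pos hc,
    Real.mul_rpow hc.le (abs_nonneg _)] at hunit
  have hcp : c ^ p = c ^ (p - 1) * c := by rw [← Real.rpow_add_one hc.ne', sub_add_cancel]
  refine le_of_mul_le_mul_left (hunit.trans_eq ?_) (Real.rpow_pos_of_pos hc p)
  rw [hcp]
  ring

end DualPow

section Lp

open scoped Topology ENNReal

variable {α ι : Type*} {mα : MeasurableSpace α} {μ : Measure α} {l : Filter ι}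

lemma abs_integral_mul_le_lpNorm_mul_lpNorm {p q : ℝ≥0∞} [p.HolderConjugate q] {f g : α → ℝ}
    (hf : MemLp f p μ) (hg : MemLp g q μ) :
    |∫ x, f x * g x ∂μ| ≤ lpNorm f p μ * lpNorm g q μ := by
  have holder : ‖∫ x, f x * g x ∂μ‖ₑ ≤ eLpNorm f p μ * eLpNorm g q μ :=
    calc ‖∫ x, f x * g x ∂μ‖ₑ ≤ ∫⁻ x, ‖f x * g x‖ₑ ∂μ := enorm_integral_le_lintegral_enorm _
      _ = eLpNorm (f • g) 1 μ := eLpNorm_one_eq_lintegral_enorm.symm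
      _ ≤ eLpNorm f p μ * eLpNorm g q μ := eLpNorm_smul_le_mul_eLpNorm hg.1 hf.1
  rw [← toReal_eLpNorm hf.1, ← toReal_eLpNorm hg.1, ← ENNReal.toReal_mul, ← Real.norm_eq_abs,
    ← toReal_enorm]
  exact ENNReal.toReal_mono (ENNReal.mul_ne_top hf.eLpNorm_ne_top hg.eLpNorm_ne_top) holder

lemma tendsto_integral_mul_zero_of_approx {p q : ℝ≥0∞} [p.HolderConjugate q] {f : ι → α → ℝ}
    {g : α → ℝ} {M : ℝ} (hf : ∀ i, MemLp (f i) p μ) (hM : ∀ i, lpNorm (f i) p μ ≤ M)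
    (hg : MemLp g q μ) (happrox : ∀ ε, 0 < ε → ∃ ψ, MemLp ψ q μ ∧ lpNorm (g - ψ) q μ ≤ ε ∧
      Tendsto (fun i => ∫ x, f i x * ψ x ∂μ) l (𝓝 0)) :
    Tendsto (fun i => ∫ x, f i x * g x ∂μ) l (𝓝 0) := by
  rw [Metric.tendsto_nhds]
  intro ε hε
  have hM0 : 0 < |M| + 1 := by positivity
  obtain ⟨ψ, hψ, hgψ, hlim⟩ := happrox (ε / 2 / (|M| + 1)) (by positivity)
  filter_upwards [Metric.tendsto_nhds.1 hlim (ε / 2) (half_pos hε)] with i hi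
  rw [Real.dist_0_eq_abs] at hi ⊢
  have hsplit : ∫ x, f i x * g x ∂μ = ∫ x, f i x * (g - ψ) x ∂μ + ∫ x, f i x * ψ x ∂μ := by
    have hsub := (hf i).integrable_mul (hg.sub hψ)
    refine Eq.trans ?_ (integral_add hsub ((hf i).integrable_mul hψ))
    simp only [Pi.sub_apply, ← mul_add, sub_add_cancel]
  have hclose : |∫ x, f i x * (g - ψ) x ∂μ| ≤ ε / 2 :=
    calc |∫ x, f i x * (g - ψ) x ∂μ| ≤ lpNorm (f i) p μ * lpNorm (g - ψ) q μ :=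
          abs_integral_mul_le_lpNorm_mul_lpNorm (hf i) (hg.sub hψ)
      _ ≤ (|M| + 1) * (ε / 2 / (|M| + 1)) := by
          gcongr
          · exact lpNorm_nonneg
          · linarith [hM i, le_abs_self M]
      _ = ε / 2 := mul_div_cancel₀ _ hM0.ne'
  calc |∫ x, f i x * g x ∂μ| ≤ |∫ x, f i x * (g - ψ) x ∂μ| + |∫ x, f i x * ψ x ∂μ| :=
        hsplit ▸ abs_add_le _ _
    _ < ε := by linarith

variable {p : ℝ}

lemma lpNorm_ofReal_rpow (hp : 0 < p) {f : α → ℝ} (hf : AEStronglyMeasurable f μ) :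
    lpNorm f (.ofReal p) μ ^ p = ∫ x, |f x| ^ p ∂μ := by
  rw [lpNorm_eq_integral_norm_rpow_toReal (ENNReal.ofReal_pos.2 hp).ne' ENNReal.ofReal_ne_top hf,
    ENNReal.toReal_ofReal hp.le, ← Real.rpow_mul (integral_nonneg fun x => by positivity),
    inv_mul_cancel₀ hp.ne', Real.rpow_one]
  rfl

lemma memLp_ofReal_iff (hp : 0 < p) {f : α → ℝ} (hf : AEStronglyMeasurable f μ) :
    MemLp f (.ofReal p) μ ↔ Integrable (fun x => |f x| ^ p) μ := by
  rw [← integrable_norm_rpow_iff hf (ENNReal.ofReal_pos.2 hp).ne' ENNReal.ofReal_ne_top,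
    ENNReal.toReal_ofReal hp.le]
  rfl

lemma tendsto_lpNorm_ofReal_zero (hp : 0 < p) {f : ι → α → ℝ}
    (h : Tendsto (fun i => lpNorm (f i) (.ofReal p) μ ^ p) l (𝓝 0)) :
    Tendsto (fun i => lpNorm (f i) (.ofReal p) μ) l (𝓝 0) := by
  have hroot := h.rpow_const (p := p⁻¹) (Or.inr (inv_nonneg.2 hp.le))
  rw [Real.zero_rpow (inv_ne_zero hp.ne')] at hroot
  simpa only [Real.rpow_rpow_inv lpNorm_nonneg hp.ne'] using hroot

lemma memLp_dualPow {q : ℝ} (hpq : p.HolderConjugate q) {f : α → ℝ}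
    (hf : MemLp f (.ofReal p) μ) : MemLp (fun x => dualPow p (f x)) (.ofReal q) μ := by
  have hmeas := (continuous_dualPow hpq.lt).comp_aestronglyMeasurable hf.1
  refine (memLp_ofReal_iff hpq.symm.pos hmeas).2 ?_
  simpa only [abs_dualPow hpq.lt, ← Real.rpow_mul (abs_nonneg _), hpq.sub_one_mul_conj]
    using (memLp_ofReal_iff hpq.pos hf.1).1 hf

lemma integrable_dualPow_mul (hp : 1 < p) {f g : α → ℝ} (hf : MemLp f (.ofReal p) μ)
    (hg : MemLp g (.ofReal p) μ) : Integrable (fun x => dualPow p (f x) * g x) μ := by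
  have hpq := Real.HolderConjugate.conjExponent hp
  have := hpq.symm.ennrealOfReal
  exact (memLp_dualPow hpq hf).integrable_mul hg

lemma integral_dualPow_mul_sub_le (hp : 1 < p) {f g : α → ℝ} (hf : MemLp f (.ofReal p) μ)
    (hg : MemLp g (.ofReal p) μ) : ∫ x, dualPow p (f x) * (f x - g x) ∂μ ≤
      2 * lpNorm f (.ofReal p) μ ^ p + lpNorm g (.ofReal p) μ ^ p := by
  have hp0 : 0 < p := zero_lt_one.trans hp
  have hf' := ((memLp_ofReal_iff hp0 hf.1).1 hf).const_mul 2
  have hg' := (memLp_ofReal_iff hp0 hg.1).1 hg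
  rw [lpNorm_ofReal_rpow hp0 hf.1, lpNorm_ofReal_rpow hp0 hg.1, ← integral_const_mul,
    ← integral_add hf' hg']
  exact integral_mono (integrable_dualPow_mul hp hf (hf.sub hg)) (hf'.add hg')
    fun x => dualPow_mul_sub_le hp (f x) (g x)

lemma integrable_dualPow_sub_mul_sub (hp : 1 < p) {f g : α → ℝ} (hf : MemLp f (.ofReal p) μ)
    (hg : MemLp g (.ofReal p) μ) :
    Integrable (fun x => (dualPow p (f x) - dualPow p (g x)) * (f x - g x)) μ :=
  ((integrable_dualPow_mul hp hf (hf.sub hg)).sub (integrable_dualPow_mul hp hg (hf.sub hg))).congr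
    (.of_forall fun _ => (sub_mul _ _ _).symm)

lemma integral_dualPow_sub_mul_sub (hp : 1 < p) {f g : α → ℝ} (hf : MemLp f (.ofReal p) μ)
    (hg : MemLp g (.ofReal p) μ) :
    ∫ x, (dualPow p (f x) - dualPow p (g x)) * (f x - g x) ∂μ =
      ∫ x, dualPow p (f x) * (f x - g x) ∂μ - ∫ x, dualPow p (g x) * (f x - g x) ∂μ := by
  simp only [sub_mul (dualPow p _)]
  exact integral_sub (integrable_dualPow_mul hp hf (hf.sub hg))
    (integrable_dualPow_mul hp hg (hf.sub hg))

lemma exists_lpNorm_sub_rpow_le (μ : Measure α) (hp : 1 < p) {ε : ℝ} (hε : 0 < ε) :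
    ∃ C, ∀ f g : α → ℝ, MemLp f (.ofReal p) μ → MemLp g (.ofReal p) μ →
      lpNorm (f - g) (.ofReal p) μ ^ p ≤
        ε * (lpNorm f (.ofReal p) μ ^ p + lpNorm g (.ofReal p) μ ^ p) +
          C * ∫ x, (dualPow p (f x) - dualPow p (g x)) * (f x - g x) ∂μ := by
  have hp0 : 0 < p := zero_lt_one.trans hp
  obtain ⟨C, hC⟩ := exists_abs_sub_rpow_le hp hε
  refine ⟨C, fun f g hf hg => ?_⟩
  have hf' := (memLp_ofReal_iff hp0 hf.1).1 hf
  have hg' := (memLp_ofReal_iff hp0 hg.1).1 hg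
  have hsum : Integrable (fun x => ε * (|f x| ^ p + |g x| ^ p)) μ := (hf'.add hg').const_mul ε
  have hdual := (integrable_dualPow_sub_mul_sub hp hf hg).const_mul C
  rw [lpNorm_ofReal_rpow hp0 (hf.sub hg).1, lpNorm_ofReal_rpow hp0 hf.1,
    lpNorm_ofReal_rpow hp0 hg.1, ← integral_add hf' hg', ← integral_const_mul,
    ← integral_const_mul, ← integral_add hsum hdual]
  exact integral_mono ((memLp_ofReal_iff hp0 (hf.sub hg).1).1 (hf.sub hg)) (hsum.add hdual)
    fun x => hC (f x) (g x)

lemma tendsto_lpNorm_sub_of_tendsto_integral_dualPow (hp : 1 < p) {f : ι → α → ℝ} {g : α → ℝ}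
    {M : ℝ} (hf : ∀ i, MemLp (f i) (.ofReal p) μ) (hg : MemLp g (.ofReal p) μ)
    (hM : ∀ i, lpNorm (f i) (.ofReal p) μ ≤ M)
    (h : Tendsto (fun i => ∫ x, (dualPow p (f i x) - dualPow p (g x)) * (f i x - g x) ∂μ)
      l (𝓝 0)) :
    Tendsto (fun i => lpNorm (f i - g) (.ofReal p) μ) l (𝓝 0) := by
  have hp0 : 0 < p := zero_lt_one.trans hp
  refine tendsto_lpNorm_ofReal_zero hp0 ?_
  refine tendsto_order.2 ⟨fun a ha => .of_forall fun i =>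
    ha.trans_le (Real.rpow_nonneg lpNorm_nonneg p), fun ε hε => ?_⟩
  obtain ⟨S, hS0, hS⟩ : ∃ S, 0 < S ∧
      ∀ i, lpNorm (f i) (.ofReal p) μ ^ p + lpNorm g (.ofReal p) μ ^ p ≤ S := by
    refine ⟨(|M| + 1) ^ p + lpNorm g (.ofReal p) μ ^ p, add_pos_of_pos_of_nonneg
      (by positivity) (Real.rpow_nonneg lpNorm_nonneg p), fun i => ?_⟩
    gcongr
    · exact lpNorm_nonneg
    · linarith [hM i, le_abs_self M]
  obtain ⟨C, hC⟩ := exists_lpNorm_sub_rpow_le μ hp (ε := ε / 2 / S) (by positivity)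
  have hlim := h.const_mul C
  rw [mul_zero] at hlim
  filter_upwards [hlim.eventually_lt_const (half_pos hε)] with i hi
  calc lpNorm (f i - g) (.ofReal p) μ ^ p
      ≤ ε / 2 / S * (lpNorm (f i) (.ofReal p) μ ^ p + lpNorm g (.ofReal p) μ ^ p) +
        C * ∫ x, (dualPow p (f i x) - dualPow p (g x)) * (f i x - g x) ∂μ := hC _ _ (hf i) hg
    _ < ε / 2 / S * S + ε / 2 :=
        add_lt_add_of_le_of_lt (mul_le_mul_of_nonneg_left (hS i) (by positivity)) hi
    _ = ε := by rw [div_mul_cancel₀ _ hS0.ne', add_halves]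

theorem tendsto_lpNorm_sub_of_limsup_integral_dualPow_le (hp : 1 < p) {f : ι → α → ℝ}
    {g : α → ℝ} {M : ℝ} (hf : ∀ i, MemLp (f i) (.ofReal p) μ) (hg : MemLp g (.ofReal p) μ)
    (hM : ∀ i, lpNorm (f i) (.ofReal p) μ ≤ M)
    (hweak : Tendsto (fun i => ∫ x, dualPow p (g x) * (f i x - g x) ∂μ) l (𝓝 0))
    (hlimsup : limsup (fun i => ∫ x, dualPow p (f i x) * (f i x - g x) ∂μ) l ≤ 0) :
    Tendsto (fun i => lpNorm (f i - g) (.ofReal p) μ) l (𝓝 0) := by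
  have : 0 < p := zero_lt_one.trans hp
  have hbdd : l.IsBoundedUnder (· ≤ ·) fun i => ∫ x, dualPow p (f i x) * (f i x - g x) ∂μ := by
    refine isBoundedUnder_of ⟨2 * M ^ p + lpNorm g (.ofReal p) μ ^ p, fun i =>
      (integral_dualPow_mul_sub_le hp (hf i) hg).trans ?_⟩
    gcongr
    · exact lpNorm_nonneg
    · exact hM i
  refine tendsto_lpNorm_sub_of_tendsto_integral_dualPow hp hf hg hM (tendsto_order.2
    ⟨fun a ha => .of_forall fun i => ha.trans_le (integral_nonneg fun x =>
      dualPow_sub_mul_sub_nonneg hp _ _), fun ε hε => ?_⟩)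
  filter_upwards [eventually_lt_of_limsup_lt (hlimsup.trans_lt (half_pos hε)) hbdd,
    hweak.eventually_const_lt (neg_lt_zero.2 (half_pos hε))] with i hupper hlower
  rw [integral_dualPow_sub_mul_sub hp (hf i) hg]
  linarith

end Lp

section Density

open scoped Topology ENNReal

variable {Y : Type*} [TopologicalSpace Y] [MeasurableSpace Y] {μ : Measure Y}
  {U : Set Y}

lemma isLocallyFiniteMeasure_comap_subtypeVal (hU : MeasurableSet U)
    (hfin : ∀ y ∈ U, μ.FiniteAtFilter (𝓝 y)) :
    IsLocallyFiniteMeasure (μ.comap ((↑) : U → Y)) where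
  finiteAtNhds y := by
    obtain ⟨s, hs, hμs⟩ := hfin y y.2
    refine ⟨(↑) ⁻¹' s, continuous_subtype_val.continuousAt.preimage_mem_nhds hs, ?_⟩
    rw [(MeasurableEmbedding.subtype_coe hU).comap_apply]
    exact (measure_mono (image_preimage_subset _ _)).trans_lt hμs

lemma exists_continuous_tsupport_subset_lpNorm_sub_le [BorelSpace Y] [LocallyCompactSpace Y]
    [SecondCountableTopology Y] [TopologicalSpace.MetrizableSpace Y] {q : ℝ≥0∞} (hq : q ≠ ∞)
    (hU : IsOpen U) (hUμ : ∀ᵐ y ∂μ, y ∈ U) (hfin : ∀ y ∈ U, μ.FiniteAtFilter (𝓝 y))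
    {g : Y → ℝ} (hg : MemLp g q μ) {ε : ℝ} (hε : 0 < ε) :
    ∃ ψ : Y → ℝ, Continuous ψ ∧ HasCompactSupport ψ ∧ tsupport ψ ⊆ U ∧ MemLp ψ q μ ∧
      lpNorm (g - ψ) q μ ≤ ε := by
  have hval : MeasurePreserving ((↑) : U → Y) (μ.comap (↑)) μ := by
    simpa only [Measure.restrict_eq_self_of_ae_mem hUμ] using
      measurePreserving_subtype_coe (μa := μ) hU.measurableSet
  -- `μ` itself need not be locally finite, so approximate in the subspace `U`, where it is.
  have := hU.locallyCompactSpace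
  have := isLocallyFiniteMeasure_comap_subtypeVal hU.measurableSet hfin
  let _ : MetricSpace U := TopologicalSpace.metrizableSpaceMetric U
  obtain ⟨ψ, hψsupp, hgψ, hψcont, hψ⟩ :=
    (hg.comp_measurePreserving hval).exists_hasCompactSupport_eLpNorm_sub_le hq
      (ENNReal.ofReal_pos.2 hε).ne'
  have hcomp : (Subtype.val.extend ψ 0 : Y → ℝ) ∘ (↑) = ψ :=
    Function.extend_comp Subtype.val_injective _ _
  have hcont := HasCompactSupport.continuous_extend_zero hU hψcont hψsupp
  have hmem : MemLp (Subtype.val.extend ψ 0 : Y → ℝ) q μ := by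
    rwa [← hval.map_eq, memLp_map_measure_iff hcont.aestronglyMeasurable hval.aemeasurable, hcomp]
  refine ⟨Subtype.val.extend ψ 0, hcont, hψsupp.extend_zero continuous_subtype_val,
    (hψsupp.tsupport_extend_zero_subset continuous_subtype_val).trans
      (Subtype.coe_image_subset U _), hmem, ?_⟩
  rw [← toReal_eLpNorm (hg.sub hmem).1]
  refine ENNReal.toReal_le_of_le_ofReal hε.le ?_
  rw [← eLpNorm_comp_measurePreserving (hg.sub hmem).1 hval]
  rwa [← hcomp] at hgψ

end Density

section WithDensity

open scoped Topology ENNReal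

lemma finiteAtFilter_withDensity {Y : Type*} [TopologicalSpace Y] [MeasurableSpace Y]
    [OpensMeasurableSpace Y] {μ : Measure Y} {f : Y → ℝ≥0∞} {y : Y}
    (hμ : μ.FiniteAtFilter (𝓝 y)) (hf : ContinuousAt f y) (hfy : f y ≠ ∞) :
    (μ.withDensity f).FiniteAtFilter (𝓝 y) := by
  obtain ⟨s, hs, hμs⟩ := hμ
  obtain ⟨c, hfc, hc⟩ := exists_between hfy.lt_top
  obtain ⟨t, hts, ht, hyt⟩ := mem_nhds_iff.1 (inter_mem hs (hf.eventually_lt_const hfc))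
  refine ⟨t, ht.mem_nhds hyt, ?_⟩
  calc μ.withDensity f t = ∫⁻ z in t, f z ∂μ := withDensity_apply _ ht.measurableSet
    _ ≤ ∫⁻ _ in t, c ∂μ := setLIntegral_mono' ht.measurableSet fun z hz => (hts hz).2.le
    _ = c * μ t := setLIntegral_const _ _
    _ < ∞ := ENNReal.mul_lt_top hc ((measure_mono fun z hz => (hts hz).1).trans_lt hμs)

end WithDensity

/-- The difference `(x, y) ↦ u x - u y` whose `L^p` norm is the Gagliardo seminorm of `u`. -/
def increment {X : Type*} (u : X → ℝ) (z : X × X) : ℝ := u z.1 - u z.2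

/-- The measure `dν(x) dν(y) / dist(x, y)^r`, with respect to which the Gagliardo seminorm of `u`
is an `L^p` norm of `increment u`. For `r ≠ 0` it does not charge the diagonal, because there the
density is `0⁻¹ = 0`. -/
def gagliardoMeasure {X : Type*} [PseudoMetricSpace X] [MeasurableSpace X] (ν : Measure X)
    (r : ℝ) : Measure (X × X) :=
  (ν.prod ν).withDensity fun z => ENNReal.ofReal (dist z.1 z.2 ^ r)⁻¹

section Increment

lemma increment_sub {X : Type*} (u v : X → ℝ) :
    increment (u - v) = increment u - increment v := by
  ext z
  simp only [increment, Pi.sub_apply]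
  ring

variable {α : Type*} [MeasurableSpace α] {ν : Measure α} {u : α → ℝ}

lemma aestronglyMeasurable_increment [SFinite ν] (hu : AEStronglyMeasurable u ν) :
    AEStronglyMeasurable (increment u) (ν.prod ν) :=
  hu.comp_fst.sub hu.comp_snd

lemma integrable_of_integrable_increment [IsFiniteMeasure ν]
    (h : Integrable (increment u) (ν.prod ν)) : Integrable u ν := by
  rcases eq_zero_or_neZero ν with rfl | hν
  · exact integrable_zero_measure
  · obtain ⟨y, hy⟩ := h.prod_left_ae.exists
    refine (hy.add (integrable_const (u y))).congr (.of_forall fun x => ?_)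
    exact sub_add_cancel (u x) (u y)

end Increment

section GagliardoMeasure

open scoped Topology ENNReal

variable {X : Type*} [PseudoMetricSpace X] {r : ℝ}

lemma continuousAt_inv_dist_rpow {z : X × X} (hz : 0 < dist z.1 z.2) :
    ContinuousAt (fun z : X × X => (dist z.1 z.2 ^ r)⁻¹) z :=
  (continuous_dist.continuousAt.rpow_const (Or.inl hz.ne')).inv₀ (Real.rpow_pos_of_pos hz r).ne'

variable [SecondCountableTopology X] [MeasurableSpace X] [OpensMeasurableSpace X]
  {ν : Measure X}

lemma integral_gagliardoMeasure (f : X × X → ℝ) :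
    ∫ z, f z ∂gagliardoMeasure ν r = ∫ z, (dist z.1 z.2 ^ r)⁻¹ * f z ∂ν.prod ν := by
  rw [gagliardoMeasure, integral_withDensity_eq_integral_toReal_smul (by fun_prop)
    (.of_forall fun _ => ENNReal.ofReal_lt_top)]
  refine integral_congr_ae (.of_forall fun z => ?_)
  simp only [smul_eq_mul]
  rw [ENNReal.toReal_ofReal (by positivity)]

lemma integrable_gagliardoMeasure_iff {f : X × X → ℝ} :
    Integrable f (gagliardoMeasure ν r) ↔
      Integrable (fun z => (dist z.1 z.2 ^ r)⁻¹ * f z) (ν.prod ν) := by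
  rw [gagliardoMeasure, integrable_withDensity_iff_integrable_smul' (by fun_prop)
    (.of_forall fun _ => ENNReal.ofReal_lt_top)]
  refine integrable_congr (.of_forall fun z => ?_)
  simp only [smul_eq_mul]
  rw [ENNReal.toReal_ofReal (by positivity)]

lemma ae_dist_pos_gagliardoMeasure (hr : r ≠ 0) :
    ∀ᵐ z ∂gagliardoMeasure ν r, 0 < dist z.1 z.2 := by
  rw [gagliardoMeasure, ae_withDensity_iff (by fun_prop)]
  refine .of_forall fun z hz => dist_nonneg.lt_of_ne' fun h => hz ?_
  rw [h, Real.zero_rpow hr, inv_zero, ENNReal.ofReal_zero]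

lemma finiteAtFilter_gagliardoMeasure [IsLocallyFiniteMeasure ν] {z : X × X}
    (hz : 0 < dist z.1 z.2) : (gagliardoMeasure ν r).FiniteAtFilter (𝓝 z) :=
  finiteAtFilter_withDensity (Measure.finiteAt_nhds _ z)
    (ENNReal.continuous_ofReal.continuousAt.comp (continuousAt_inv_dist_rpow hz))
    ENNReal.ofReal_ne_top

end GagliardoMeasure

section ParametricIntegral

variable {X Y : Type*} [TopologicalSpace X] [TopologicalSpace Y] [MeasurableSpace Y]
  {ν : Measure Y} {Ψ : X × Y → ℝ}

lemma hasCompactSupport_integral_prod [R1Space X] (hsupp : HasCompactSupport Ψ) :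
    HasCompactSupport fun x => ∫ y, Ψ (x, y) ∂ν := by
  refine .intro (hsupp.isCompact.image continuous_fst) fun x hx => ?_
  refine integral_eq_zero_of_ae (.of_forall fun y => ?_)
  exact image_eq_zero_of_notMem_tsupport fun h => hx (mem_image_of_mem Prod.fst h)

lemma continuous_integral_prod [FirstCountableTopology X] [LocallyCompactSpace X]
    [OpensMeasurableSpace Y] [IsLocallyFiniteMeasure ν] (hΨ : Continuous Ψ)
    (hsupp : HasCompactSupport Ψ) : Continuous fun x => ∫ y, Ψ (x, y) ∂ν := by
  have hcont := continuous_parametric_integral_of_continuous (μ := ν)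
    (f := fun x y => Ψ (x, y)) hΨ (hsupp.isCompact.image continuous_snd)
  refine hcont.congr fun x => setIntegral_eq_integral_of_forall_compl_eq_zero fun y hy => ?_
  exact image_eq_zero_of_notMem_tsupport fun h => hy (mem_image_of_mem Prod.snd h)

end ParametricIntegral

lemma locallyIntegrable_comp_fst {X Y : Type*} [TopologicalSpace X] [TopologicalSpace Y]
    [LocallyCompactSpace X] [LocallyCompactSpace Y] [MeasurableSpace X] [MeasurableSpace Y]
    {ν : Measure X} {μ : Measure Y} [SFinite ν] [SFinite μ] [IsLocallyFiniteMeasure μ]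
    {u : X → ℝ} (hu : LocallyIntegrable u ν) :
    LocallyIntegrable (fun z : X × Y => u z.1) (ν.prod μ) := by
  refine locallyIntegrable_iff.2 fun K hK => ?_
  have hfst := hK.image continuous_fst
  have hsnd := hK.image continuous_snd
  refine IntegrableOn.mono_set ?_ (t := (Prod.fst '' K) ×ˢ (Prod.snd '' K))
    fun z hz => ⟨mem_image_of_mem _ hz, mem_image_of_mem _ hz⟩
  have : IsFiniteMeasure (μ.restrict (Prod.snd '' K)) :=
    isFiniteMeasure_restrict.2 hsnd.measure_lt_top.ne
  rw [IntegrableOn, ← Measure.prod_restrict]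
  exact (hu.integrableOn_isCompact hfst).comp_fst _

section LocallyIntegrable

open scoped Topology

variable {X : Type*} [MetricSpace X] {r p : ℝ}

lemma abs_increment_rpow_le (hp : 0 < p) (hr : 0 ≤ r) (u : X → ℝ) {R : ℝ} {z : X × X}
    (hz : dist z.1 z.2 ≤ R) :
    |increment u z| ^ p ≤ R ^ r * ((dist z.1 z.2 ^ r)⁻¹ * |increment u z| ^ p) := by
  rcases dist_nonneg.eq_or_lt' (a := dist z.1 z.2) with h | h
  · simp [increment, dist_eq_zero.1 h, Real.zero_rpow hp.ne']
  · rw [← mul_assoc, ← div_eq_mul_inv]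
    refine le_mul_of_one_le_left (by positivity) ?_
    exact (one_le_div (Real.rpow_pos_of_pos h r)).2 (Real.rpow_le_rpow h.le hz hr)

variable [ProperSpace X] [MeasurableSpace X] [BorelSpace X] {ν : Measure X}
  [IsLocallyFiniteMeasure ν]

lemma locallyIntegrable_of_memLp_increment (hp : 1 ≤ p) (hr : 0 ≤ r) {u : X → ℝ}
    (hu : AEStronglyMeasurable u ν) (h : MemLp (increment u) (.ofReal p) (gagliardoMeasure ν r)) :
    LocallyIntegrable u ν := by
  intro x
  have hp0 : 0 < p := zero_lt_one.trans_le hp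
  have : IsFiniteMeasure (ν.restrict (ball x 1)) :=
    isFiniteMeasure_restrict.2 measure_ball_lt_top.ne
  refine ⟨ball x 1, ball_mem_nhds x one_pos, integrable_of_integrable_increment ?_⟩
  have hmeas := aestronglyMeasurable_increment (hu.restrict (s := ball x 1))
  refine ((memLp_ofReal_iff hp0 hmeas).2 ?_).integrable (ENNReal.one_le_ofReal.2 hp)
  have henergy := integrable_gagliardoMeasure_iff.1 ((memLp_ofReal_iff hp0 h.1).1 h)
  rw [Measure.prod_restrict] at hmeas ⊢
  refine (henergy.restrict.const_mul (2 ^ r)).mono'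
    (hmeas.norm.aemeasurable.pow_const p).aestronglyMeasurable ?_
  refine (ae_restrict_iff' (measurableSet_ball.prod measurableSet_ball)).2 (.of_forall ?_)
  rintro z ⟨hz₁, hz₂⟩
  rw [Real.norm_of_nonneg (by positivity)]
  refine abs_increment_rpow_le hp0 hr u ?_
  linarith [dist_triangle_right z.1 z.2 x, mem_ball.1 hz₁, mem_ball.1 hz₂]

lemma integrable_comp_fst_mul {v : X → ℝ} (hv : LocallyIntegrable v ν) {Ψ : X × X → ℝ}
    (hΨ : Continuous Ψ) (hsupp : HasCompactSupport Ψ) :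
    Integrable (fun z => v z.1 * Ψ z) (ν.prod ν) :=
  (locallyIntegrable_comp_fst hv).integrable_smul_right_of_hasCompactSupport hΨ hsupp

lemma integral_increment_mul {v : X → ℝ} (hv : LocallyIntegrable v ν) {Ψ : X × X → ℝ}
    (hΨ : Continuous Ψ) (hsupp : HasCompactSupport Ψ) :
    ∫ z, increment v z * Ψ z ∂ν.prod ν = ∫ x, v x * ∫ y, (Ψ (x, y) - Ψ (y, x)) ∂ν ∂ν := by
  have hΨswap : Continuous (Ψ ∘ Prod.swap) := hΨ.comp continuous_swap
  have hsuppswap : HasCompactSupport (Ψ ∘ Prod.swap) :=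
    hsupp.comp_homeomorph (Homeomorph.prodComm X X)
  have hint := integrable_comp_fst_mul hv hΨ hsupp
  have hintswap := integrable_comp_fst_mul hv hΨswap hsuppswap
  have hint₂ : Integrable (fun z : X × X => v z.2 * Ψ z) (ν.prod ν) := hintswap.swap
  have hswap : ∫ z : X × X, v z.2 * Ψ z ∂ν.prod ν
      = ∫ z : X × X, v z.1 * (Ψ ∘ Prod.swap) z ∂ν.prod ν :=
    (integral_prod_swap fun z : X × X => v z.2 * Ψ z).symm
  calc ∫ z, increment v z * Ψ z ∂ν.prod ν
      = ∫ z : X × X, v z.1 * Ψ z ∂ν.prod ν - ∫ z : X × X, v z.2 * Ψ z ∂ν.prod ν := by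
        rw [← integral_sub hint hint₂]
        simp only [increment, sub_mul]
    _ = ∫ x, ∫ y, (v x * Ψ (x, y) - v x * Ψ (y, x)) ∂ν ∂ν := by
        rw [hswap, ← integral_sub' hint hintswap]
        exact integral_prod _ (hint.sub hintswap)
    _ = ∫ x, v x * ∫ y, (Ψ (x, y) - Ψ (y, x)) ∂ν ∂ν := by
        simp only [← mul_sub, integral_const_mul]

end LocallyIntegrable

section WeakConvergence

open scoped Topology

variable {X : Type*} [MetricSpace X] [ProperSpace X] [MeasurableSpace X] [BorelSpace X]
  {ν : Measure X} [IsLocallyFiniteMeasure ν] {r p : ℝ} {ι : Type*} {l : Filter ι}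

lemma tendsto_integral_increment_mul_zero {v : ι → X → ℝ} (hv : ∀ i, LocallyIntegrable (v i) ν)
    (hweak : ∀ φ : X → ℝ, Continuous φ → HasCompactSupport φ →
      Tendsto (fun i => ∫ x, v i x * φ x ∂ν) l (𝓝 0))
    {Ψ : X × X → ℝ} (hΨ : Continuous Ψ) (hsupp : HasCompactSupport Ψ) :
    Tendsto (fun i => ∫ z, increment (v i) z * Ψ z ∂ν.prod ν) l (𝓝 0) := by
  have hcont : Continuous fun z => Ψ z - Ψ z.swap := hΨ.sub (hΨ.comp continuous_swap)
  have hsupp' : HasCompactSupport fun z => Ψ z - Ψ z.swap :=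
    hsupp.sub (hsupp.comp_homeomorph (Homeomorph.prodComm X X))
  simp only [integral_increment_mul (hv _) hΨ hsupp]
  exact hweak _ (continuous_integral_prod hcont hsupp') (hasCompactSupport_integral_prod hsupp')

lemma tendsto_integral_gagliardoMeasure_increment_mul_zero {v : ι → X → ℝ}
    (hv : ∀ i, LocallyIntegrable (v i) ν)
    (hweak : ∀ φ : X → ℝ, Continuous φ → HasCompactSupport φ →
      Tendsto (fun i => ∫ x, v i x * φ x ∂ν) l (𝓝 0))
    {ψ : X × X → ℝ} (hψ : Continuous ψ) (hsupp : HasCompactSupport ψ)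
    (hdiag : ∀ z ∈ tsupport ψ, 0 < dist z.1 z.2) :
    Tendsto (fun i => ∫ z, increment (v i) z * ψ z ∂gagliardoMeasure ν r) l (𝓝 0) := by
  have hcont : Continuous fun z : X × X => (dist z.1 z.2 ^ r)⁻¹ * ψ z :=
    continuous_of_tsupport fun z hz =>
      (continuousAt_inv_dist_rpow (hdiag z (tsupport_mul_subset_right hz))).mul hψ.continuousAt
  simp only [integral_gagliardoMeasure, mul_left_comm _ (increment _ _)]
  exact tendsto_integral_increment_mul_zero hv hweak hcont hsupp.mul_left

lemma tendsto_integral_increment_mul_zero_of_bounded {q : ℝ} (hpq : p.HolderConjugate q)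
    (hr : 0 < r) {v : ι → X → ℝ} (hv : ∀ i, AEStronglyMeasurable (v i) ν)
    (hmem : ∀ i, MemLp (increment (v i)) (.ofReal p) (gagliardoMeasure ν r)) {M : ℝ}
    (hM : ∀ i, lpNorm (increment (v i)) (.ofReal p) (gagliardoMeasure ν r) ≤ M)
    (hweak : ∀ φ : X → ℝ, Continuous φ → HasCompactSupport φ →
      Tendsto (fun i => ∫ x, v i x * φ x ∂ν) l (𝓝 0))
    {g : X × X → ℝ} (hg : MemLp g (.ofReal q) (gagliardoMeasure ν r)) :
    Tendsto (fun i => ∫ z, increment (v i) z * g z ∂gagliardoMeasure ν r) l (𝓝 0) := by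
  have := hpq.ennrealOfReal
  have hloc i := locallyIntegrable_of_memLp_increment hpq.lt.le hr.le (hv i) (hmem i)
  refine tendsto_integral_mul_zero_of_approx hmem hM hg fun ε hε => ?_
  obtain ⟨ψ, hψ, hsupp, hdiag, hψmem, hψε⟩ := exists_continuous_tsupport_subset_lpNorm_sub_le
    ENNReal.ofReal_ne_top (isOpen_lt continuous_const continuous_dist)
    (ae_dist_pos_gagliardoMeasure hr.ne') (fun _ => finiteAtFilter_gagliardoMeasure) hg hε
  exact ⟨ψ, hψmem, hψε,
    tendsto_integral_gagliardoMeasure_increment_mul_zero hloc hweak hψ hsupp fun _ hz => hdiag hz⟩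

theorem tendsto_lpNorm_increment_sub (hp : 1 < p) (hr : 0 < r) {u : ι → X → ℝ} {u₀ : X → ℝ}
    (hu : ∀ i, AEStronglyMeasurable (u i) ν) (hu₀ : AEStronglyMeasurable u₀ ν)
    (hmem : ∀ i, MemLp (increment (u i)) (.ofReal p) (gagliardoMeasure ν r))
    (hmem₀ : MemLp (increment u₀) (.ofReal p) (gagliardoMeasure ν r)) {M : ℝ}
    (hM : ∀ i, lpNorm (increment (u i)) (.ofReal p) (gagliardoMeasure ν r) ≤ M)
    (hweak : ∀ φ : X → ℝ, Continuous φ → HasCompactSupport φ →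
      Tendsto (fun i => ∫ x, u i x * φ x ∂ν) l (𝓝 (∫ x, u₀ x * φ x ∂ν)))
    (hlimsup : limsup (fun i => ∫ z, dualPow p (increment (u i) z) *
      increment (u i - u₀) z ∂gagliardoMeasure ν r) l ≤ 0) :
    Tendsto (fun i => lpNorm (increment (u i - u₀)) (.ofReal p) (gagliardoMeasure ν r))
      l (𝓝 0) := by
  have hpq := Real.HolderConjugate.conjExponent hp
  have hmem_sub i : MemLp (increment (u i - u₀)) (.ofReal p) (gagliardoMeasure ν r) := by
    rw [increment_sub]
    exact (hmem i).sub hmem₀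
  have hM_sub i : lpNorm (increment (u i - u₀)) (.ofReal p) (gagliardoMeasure ν r) ≤
      M + lpNorm (increment u₀) (.ofReal p) (gagliardoMeasure ν r) := by
    rw [increment_sub]
    exact (lpNorm_sub_le (hmem i) (ENNReal.one_le_ofReal.2 hp.le)).trans (by grw [hM i])
  have hweak_sub (φ : X → ℝ) (hφ : Continuous φ) (hsupp : HasCompactSupport φ) :
      Tendsto (fun i => ∫ x, (u i - u₀) x * φ x ∂ν) l (𝓝 0) := by
    have hint {w : X → ℝ} (hw : AEStronglyMeasurable w ν)
        (hwmem : MemLp (increment w) (.ofReal p) (gagliardoMeasure ν r)) :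
        Integrable (fun x => w x * φ x) ν :=
      (locallyIntegrable_of_memLp_increment hp.le hr.le hw hwmem
        ).integrable_smul_right_of_hasCompactSupport hφ hsupp
    simpa only [Pi.sub_apply, sub_mul, sub_self, integral_sub (hint (hu _) (hmem _))
      (hint hu₀ hmem₀)] using (hweak φ hφ hsupp).sub_const (∫ x, u₀ x * φ x ∂ν)
  have hpair := tendsto_integral_increment_mul_zero_of_bounded hpq hr (fun i => (hu i).sub hu₀)
    hmem_sub hM_sub hweak_sub (memLp_dualPow hpq hmem₀)
  simp only [increment_sub] at hlimsup hpair ⊢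
  refine tendsto_lpNorm_sub_of_limsup_integral_dualPow_le hp hmem hmem₀ hM ?_ hlimsup
  simpa only [mul_comm, Pi.sub_apply] using hpair

end WeakConvergence

section FractionalSobolev

variable {N : ℕ} {s p : ℝ} {Ω : Set (EuclideanSpace ℝ (Fin N))}
  {u v : EuclideanSpace ℝ (Fin N) → ℝ}

lemma memLp_increment_of_memW0 (hp : 0 < p) (hu : memW0 N s p Ω u) :
    MemLp (increment u) (.ofReal p) (gagliardoMeasure volume (N + s * p)) := by
  have hmeas : AEStronglyMeasurable (increment u) (gagliardoMeasure volume (N + s * p)) :=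
    (aestronglyMeasurable_increment hu.1.aestronglyMeasurable).mono_ac
      (withDensity_absolutelyContinuous _ _)
  refine (memLp_ofReal_iff hp hmeas).2 (integrable_gagliardoMeasure_iff.2 ?_)
  simpa only [increment, dist_eq_norm, div_eq_inv_mul] using! hu.2.1

lemma integral_integral_div_norm_rpow {r : ℝ}
    {f : EuclideanSpace ℝ (Fin N) × EuclideanSpace ℝ (Fin N) → ℝ}
    (hf : Integrable f (gagliardoMeasure volume r)) :
    ∫ x, ∫ y, f (x, y) / ‖x - y‖ ^ r = ∫ z, f z ∂gagliardoMeasure volume r := by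
  rw [integral_gagliardoMeasure, integral_prod _ (integrable_gagliardoMeasure_iff.1 hf)]
  simp only [dist_eq_norm, div_eq_inv_mul]

lemma gagNorm_eq_lpNorm (hp : 0 < p)
    (hu : MemLp (increment u) (.ofReal p) (gagliardoMeasure volume (N + s * p))) :
    gagNorm N s p u = lpNorm (increment u) (.ofReal p) (gagliardoMeasure volume (N + s * p)) := by
  have henergy : gagE N s p u = ∫ z, |increment u z| ^ p ∂gagliardoMeasure volume (N + s * p) :=
    integral_integral_div_norm_rpow ((memLp_ofReal_iff hp hu.1).1 hu)
  rw [gagNorm, henergy, ← lpNorm_ofReal_rpow hp hu.1, one_div,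
    Real.rpow_rpow_inv lpNorm_nonneg hp.ne']

lemma fracPair_eq_integral (hp : 1 < p)
    (hu : MemLp (increment u) (.ofReal p) (gagliardoMeasure volume (N + s * p)))
    (hv : MemLp (increment v) (.ofReal p) (gagliardoMeasure volume (N + s * p))) :
    fracPair N s p u v = ∫ z, dualPow p (increment u z) * increment v z
      ∂gagliardoMeasure volume (N + s * p) :=
  integral_integral_div_norm_rpow (integrable_dualPow_mul hp hu hv)

end FractionalSobolev

theorem stmt7_general (N : ℕ) (Ω : Set (EuclideanSpace ℝ (Fin N))) (s p : ℝ) (hs : 0 < s)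
    (hp : 1 < p) (u_ : ℕ → EuclideanSpace ℝ (Fin N) → ℝ) (u : EuclideanSpace ℝ (Fin N) → ℝ)
    (hmem : ∀ n, memW0 N s p Ω (u_ n)) (hmemu : memW0 N s p Ω u)
    (hweak : weakConv N s p u_ u)
    (hlimsup : limsup (fun n => fracPair N s p (u_ n) (fun x => u_ n x - u x)) atTop ≤ 0) :
    Tendsto (fun n => gagNorm N s p (fun x => u_ n x - u x)) atTop (nhds 0) := by
  have hp0 : 0 < p := zero_lt_one.trans hp
  have hr : 0 < N + s * p := by positivity
  have hLp n := memLp_increment_of_memW0 hp0 (hmem n)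
  have hLpu := memLp_increment_of_memW0 hp0 hmemu
  have hLp_sub n : MemLp (increment (u_ n - u)) (.ofReal p)
      (gagliardoMeasure volume (N + s * p)) := by
    rw [increment_sub]
    exact (hLp n).sub hLpu
  obtain ⟨⟨M, hM⟩, htest⟩ := hweak
  refine (tendsto_lpNorm_increment_sub hp hr (fun n => (hmem n).1.aestronglyMeasurable)
    hmemu.1.aestronglyMeasurable hLp hLpu (fun n => (gagNorm_eq_lpNorm hp0 (hLp n)).ge.trans (hM n))
    htest ?_).congr fun n => (gagNorm_eq_lpNorm hp0 (hLp_sub n)).symm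
  simpa only [← fracPair_eq_integral hp (hLp _) (hLp_sub _)] using! hlimsup

/-- the fractional `p`-Laplacian operator `A` is of type `(S₊)`:
if `uₙ ⇀ u` weakly in `W₀^{s,p}(Ω)` and `limsup ⟨A uₙ, uₙ - u⟩ ≤ 0`, then `uₙ → u`
strongly, i.e. `‖uₙ - u‖ → 0`. -/
theorem stmt7 (N : ℕ) (Ω : Set (EuclideanSpace ℝ (Fin N)))
    (hΩo : IsOpen Ω) (hΩc : IsConnected Ω) (hΩb : Bornology.IsBounded Ω)
    (s p : ℝ) (hs0 : 0 < s) (hs1 : s < 1) (hp : 1 < p)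
    (u_ : ℕ → EuclideanSpace ℝ (Fin N) → ℝ) (u : EuclideanSpace ℝ (Fin N) → ℝ)
    (hmem : ∀ n, memW0 N s p Ω (u_ n)) (hmemu : memW0 N s p Ω u)
    (hweak : weakConv N s p u_ u)
    (hlimsup : limsup (fun n => fracPair N s p (u_ n) (fun x => u_ n x - u x)) atTop ≤ 0) :
    Tendsto (fun n => gagNorm N s p (fun x => u_ n x - u x)) atTop (nhds 0) :=
  stmt7_general N Ω s p hs0 hp u_ u hmem hmemu hweak hlimsup

end
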